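/- Let n_1 ≥ n_2 ≥ ⋯ ≥ n_{k−3} ≥ 2 with k ≥ 4. Then the complete k-partite graph K_{n_1,…,n_{k−3},2,2,1} (with two parts of size 2 and one part of size 1 appended) is S-determined: every graph with the same Seidel spectrum is switching equivalent to a graph isomorphic to K_{n_1,…,n_{k−3},2,2,1}. -/

import Mathlib

open Polynomial Matrix Finset SimpleGraph

/- The Seidel matrix `S(G) = J - I - 2A(G)` of a simple graph `G`. -/
open scoped Classical in
noncomputable def seidelMatrix {V : Type*} [Fintype V] [DecidableEq V]
    (G : SimpleGraph V) : Matrix V V ℝ :=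
  (Matrix.of fun _ _ => (1 : ℝ)) - 1 - 2 • G.adjMatrix ℝ

/-- Two graphs on the same vertex set are switching equivalent iff their Seidel
matrices are conjugate by a diagonal `±1` matrix. -/
def SwitchingEquiv {V : Type*} [Fintype V] [DecidableEq V]
    (G H : SimpleGraph V) : Prop :=
  ∃ ε : V → ℝ, (∀ v, ε v = 1 ∨ ε v = -1) ∧
    seidelMatrix H = Matrix.diagonal ε * seidelMatrix G * Matrix.diagonal ε

/-- A graph `G` is determined, up to switching, by its Seidel spectrum
(`S`-determined) if every graph with the same Seidel spectrum is switching
equivalent to a graph isomorphic to `G`. -/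
def SDetermined {V : Type} [Fintype V] [DecidableEq V] (G : SimpleGraph V) : Prop :=
  ∀ (W : Type) [Fintype W] [DecidableEq W] (H : SimpleGraph W),
    (seidelMatrix H).charpoly = (seidelMatrix G).charpoly →
    ∃ H' : SimpleGraph W, SwitchingEquiv H H' ∧ Nonempty (H' ≃g G)

theorem Matrix.IsHermitian.exists_eq_transpose_mul_mul_of_charpoly_eq {V : Type*} [Fintype V]
    [DecidableEq V] {A B : Matrix V V ℝ} (hA : A.IsHermitian) (hB : B.IsHermitian)
    (h : B.charpoly = A.charpoly) : ∃ U : Matrix V V ℝ, B = Uᵀ * A * U := by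
  have he : hB.eigenvalues = hA.eigenvalues := (hB.eigenvalues_eq_eigenvalues_iff hA).2 h
  set P : Matrix V V ℝ := (hA.eigenvectorUnitary : Matrix V V ℝ) with hP
  set Q : Matrix V V ℝ := (hB.eigenvectorUnitary : Matrix V V ℝ) with hQ
  set E := diagonal hA.eigenvalues with hE
  have h1 : A = P * E * Pᵀ := by
    have := hA.spectral_theorem
    rw [Unitary.conjStarAlgAut_apply] at this
    exact this
  have h2 : B = Q * E * Qᵀ := by
    have := hB.spectral_theorem
    rw [Unitary.conjStarAlgAut_apply, he] at this
    exact this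
  have h3 : Pᵀ * P = 1 := by
    simpa [star_eq_conjTranspose] using Unitary.coe_star_mul_self hA.eigenvectorUnitary
  refine ⟨P * Qᵀ, ?_⟩
  rw [h1, h2]
  simp only [transpose_mul, transpose_transpose]
  calc Q * E * Qᵀ = Q * (Pᵀ * P) * E * (Pᵀ * P) * Qᵀ := by rw [h3]; simp
    _ = _ := by simp only [Matrix.mul_assoc]

theorem exists_smul_eq_one_transitive {W : Type*} [Fintype W] [DecidableEq W]
    (M : Matrix W W ℝ) (hsymm : ∀ a b, M a b = M b a) (hsign : ∀ a b, M a b = 1 ∨ M a b = -1)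
    (hdiag : ∀ a, M a a = 1) (l : W → ℝ)
    (hl : ∀ x : W → ℝ, l ⬝ᵥ x = 0 → 0 ≤ x ⬝ᵥ (M *ᵥ x)) :
    ∃ ε : W → ℝ, (∀ a, ε a = 1 ∨ ε a = -1) ∧ ∀ a b c, ε a * M a b * ε b = 1 →
      ε b * M b c * ε c = 1 → ε a * M a c * ε c = 1 := by
  rcases isEmpty_or_nonempty W with hW | ⟨⟨v⟩⟩
  · exact ⟨fun _ => 1, by simp, fun a => hW.elim a⟩
  set N : W → W → ℝ := fun a b => M v a * M a b * M v b with hN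
  have sq : ∀ a, M v a * M v a = 1 := fun a => by rcases hsign v a with h | h <;> simp [h]
  have Nsymm : ∀ a b, N a b = N b a := fun a b => by simp only [hN, hsymm a b]; ring
  have Nsign : ∀ a b, N a b = 1 ∨ N a b = -1 := fun a b => by
    rcases hsign v a with h | h <;> rcases hsign v b with h' | h' <;>
      rcases hsign a b with h'' | h'' <;> simp [hN, h, h', h'']
  have Ndiag : ∀ a, N a a = 1 := fun a => by simp [hN, hdiag, sq]
  have Nv : ∀ a, N v a = 1 := fun a => by simp [hN, hdiag, sq]
  have key : ∀ (t : Fin 5 → W) (α : Fin 5 → ℝ), ∑ k, α k * (M v (t k) * l (t k)) = 0 →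
      0 ≤ ∑ i, ∑ j, α i * α j * N (t i) (t j) := by
    intro t α h
    have := hl (∑ k, (α k * M v (t k)) • Pi.single (t k) 1) (by
      rw [dotProduct_sum, ← h]
      refine Finset.sum_congr rfl fun k _ => ?_
      simp; ring)
    refine this.trans_eq ?_
    simp only [mulVec_sum, dotProduct_sum, sum_dotProduct]
    rw [Finset.sum_comm]
    refine Finset.sum_congr rfl fun i _ => Finset.sum_congr rfl fun j _ => ?_
    simp [hN, mulVec_smul]; ring
  have forb : ∀ a b c d, N a b = -1 → N c d = -1 → N a c = 1 → N b c = 1 → False := by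
    intro a b c d hab hcd hac hbc
    have main : ∀ (α β : Fin 5 → ℝ),
        (∀ s t : ℝ, ∑ i, ∑ j, (s * α i + t * β i) * (s * α j + t * β j) *
          N (![v, a, b, c, d] i) (![v, a, b, c, d] j) ≤ -2 * s ^ 2 - 2 * t ^ 2) → False := by
      intro α β hq
      set L : (Fin 5 → ℝ) → ℝ := fun α => ∑ k, α k *
        (M v (![v, a, b, c, d] k) * l (![v, a, b, c, d] k)) with hL
      have lin : ∀ s t : ℝ, L (fun i => s * α i + t * β i) = s * L α + t * L β := by
        intro s t
        simp only [hL, Finset.mul_sum, ← Finset.sum_add_distrib]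
        exact Finset.sum_congr rfl fun _ _ => by ring
      have h1 := (key _ (fun i => L β * α i + (-L α) * β i)
        ((lin _ _).trans (by ring))).trans (hq _ _)
      have ha : L α = 0 := by nlinarith [sq_nonneg (L α), sq_nonneg (L β)]
      have h2 := (key _ (fun i => 1 * α i + 0 * β i) ((lin _ _).trans (by rw [ha]; ring))).trans
        (hq _ _)
      norm_num at h2
    have e := Nsymm
    have nv : ∀ a, N a v = 1 := fun a => by rw [Nsymm, Nv]
    have hba := (e b a).trans hab
    have hdc := (e d c).trans hcd
    have hca := (e c a).trans hac
    have hcb := (e c b).trans hbc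
    rcases Nsign a d with had | had <;> rcases Nsign b d with hbd | hbd <;>
      have hda := (e d a).trans had <;> have hdb := (e d b).trans hbd
    on_goal 4 =>
      apply main ![-2, 1, 1, 0, 0] ![-1, -1, -1, 2, 1]
    all_goals try apply main ![-2, 1, 1, 0, 0] ![-2, 0, 0, 1, 1]
    all_goals
      intro s t
      simp [Fin.sum_univ_five, hab, hba, hcd, hdc, hac, hca, hbc, hcb, had, hda, hbd, hdb, Nv, nv,
        Ndiag]
      nlinarith [sq_nonneg (s + t), sq_nonneg (s - t), sq_nonneg s, sq_nonneg t]
  classical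
  set δ : W → ℝ := fun a => if ∀ b, N a b = 1 then -1 else 1 with hδ
  have hin : ∀ a b, (∀ b, N a b = 1) → N b a = 1 := fun a b h => (Nsymm _ _).trans (h b)
  have hrel : ∀ a b, δ a * N a b * δ b = 1 ↔
      N a b = 1 ∧ ((∀ b, N a b = 1) ↔ (∀ c, N b c = 1)) := by
    intro a b
    by_cases ha : ∀ b, N a b = 1 <;> by_cases hb : ∀ c, N b c = 1
    · simp [hδ, ha, hb]
    · simp only [hδ, if_pos ha, if_neg hb, ha b]; norm_num; tauto
    · simp only [hδ, if_neg ha, if_pos hb, hin b a hb]; norm_num; tauto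
    · simp only [hδ, if_neg ha, if_neg hb]; norm_num; tauto
  have hconv : ∀ a b, δ a * M v a * M a b * (δ b * M v b) = δ a * N a b * δ b :=
    fun a b => by simp only [hN]; ring
  refine ⟨fun a => δ a * M v a, fun a => ?_, fun a b c => ?_⟩
  · rcases hsign v a with h | h <;> by_cases h' : ∀ b, N a b = 1 <;> simp [hδ, h, h']
  · simp only [hconv, hrel]
    rintro ⟨h1, h2⟩ ⟨h3, h4⟩
    refine ⟨?_, h2.trans h4⟩
    by_contra hac
    have hac' := (Nsign a c).resolve_left hac
    have hb : ¬ ∀ c, N b c = 1 := fun h => hac (h2.2 h c)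
    push Not at hb
    obtain ⟨d, hd⟩ := hb
    exact forb a c b d hac' ((Nsign b d).resolve_left hd) h1 ((Nsymm _ _).trans h3)

/-- The matrix `S + I`, where `S` is the Seidel matrix of the complete multipartite graph whose
parts are the fibres of `c`. -/
def fiberSignMatrix {W I : Type*} [DecidableEq I] (c : W → I) : Matrix W W ℝ :=
  Matrix.of fun a b => if c a = c b then 1 else -1

theorem charpoly_diagonal_sub_replicate {I : Type*} [Fintype I] [DecidableEq I] (q : I → ℝ) :
    2 * (diagonal (fun i => 2 * q i) - Matrix.of fun _ j => q j).charpoly =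
      C (2 - Fintype.card I : ℝ) * ∏ i, (X - C (2 * q i)) +
        X * derivative (∏ i, (X - C (2 * q i))) := by
  set f : ℝ[X] := ∏ i, (X - C (2 * q i)) with hf
  have hf0 : f ≠ 0 := (monic_prod_X_sub_C _ _).ne_zero
  refine Polynomial.eq_of_infinite_eval_eq _ _ ?_
  have hfin : {y | f.eval y = 0}.Finite :=
    (Polynomial.rootSet_finite f ℝ).subset fun y hy => by simpa [mem_rootSet, hf0] using hy
  refine Set.Infinite.mono ?_ hfin.infinite_compl
  · intro y hy
    have hy' : ∀ i, y - 2 * q i ≠ 0 := by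
      intro i h
      apply hy
      simp only [hf, Set.mem_ofPred_eq, eval_prod]
      exact Finset.prod_eq_zero (Finset.mem_univ i) (by simpa using h)
    have hdet : (diagonal (fun i => 2 * q i) - Matrix.of fun _ j => q j).charpoly.eval y =
        (∏ i, (y - 2 * q i)) * (1 + ∑ i, q i * (y - 2 * q i)⁻¹) := by
      rw [Matrix.eval_charpoly]
      have : (scalar I y - (diagonal (fun i => 2 * q i) - Matrix.of fun _ j => q j)) =
          diagonal (fun i => y - 2 * q i) *
            (1 + replicateCol Unit (fun i => (y - 2 * q i)⁻¹) * replicateRow Unit q) := by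
        ext i j
        rw [mul_add, mul_one, Matrix.add_apply, diagonal_mul]
        by_cases hij : i = j
        · subst hij
          simp [Matrix.mul_apply, hy']
          ring
        · simp [Matrix.mul_apply, hij, hy' i]
      rw [this, det_mul, det_diagonal, det_one_add_replicateCol_mul_replicateRow]
      rfl
    have hder : (derivative f).eval y = (∏ i, (y - 2 * q i)) * ∑ i, (y - 2 * q i)⁻¹ := by
      simp only [hf, derivative_prod_finset, eval_finsetSum, Finset.mul_sum]
      refine Finset.sum_congr rfl fun i _ => ?_
      rw [← Finset.mul_prod_erase _ _ (Finset.mem_univ i)]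
      simp [eval_prod, -map_mul]
      field_simp [hy' i]
    have hfe : f.eval y = ∏ i, (y - 2 * q i) := by simp [hf, eval_prod, -map_mul]
    simp only [Set.mem_ofPred_eq, eval_mul, eval_add, eval_C, eval_X, hder, hdet, hfe]
    have h2 : (2 : ℝ[X]).eval y = 2 := by simp
    have : ∑ i, q i * (y - 2 * q i)⁻¹ =
        (y * ∑ i, (y - 2 * q i)⁻¹ - Fintype.card I) / 2 := by
      rw [Finset.mul_sum, ← Finset.card_univ, Finset.card_eq_sum_ones, Nat.cast_sum,
        ← Finset.sum_sub_distrib, Finset.sum_div]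
      refine Finset.sum_congr rfl fun i _ => ?_
      rw [Nat.cast_one]
      linear_combination (-1 / 2 : ℝ) * mul_inv_cancel₀ (hy' i)
    rw [this, h2]
    ring

theorem X_pow_mul_charpoly_fiberSignMatrix {W I : Type*} [Fintype W] [DecidableEq W] [Fintype I]
    [DecidableEq I] (c : W → I) {q : I → ℕ} (hq : ∀ i, Fintype.card {a // c a = i} = q i) :
    X ^ Fintype.card I * (fiberSignMatrix c).charpoly = X ^ Fintype.card W *
      (diagonal (fun i => 2 * (q i : ℝ)) - Matrix.of fun _ j => (q j : ℝ)).charpoly := by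
  set B : Matrix W I ℝ := Matrix.of fun a i => if c a = i then 1 else 0 with hB
  set D : Matrix I I ℝ := Matrix.of fun i j => if i = j then 1 else -1 with hD
  have h1 : fiberSignMatrix c = B * (D * Bᵀ) := by
    ext a b
    rw [Matrix.mul_apply, Finset.sum_eq_single (c a)]
    · simp [Matrix.mul_apply, hB, hD, fiberSignMatrix]
    · intro i _ hi
      simp [hB, hi.symm]
    · simp
  have h2 : (D * Bᵀ) * B = diagonal (fun i => 2 * (q i : ℝ)) - Matrix.of fun _ j => (q j : ℝ) := by
    have : Bᵀ * B = diagonal (fun i => (q i : ℝ)) := by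
      ext i j
      simp only [Matrix.mul_apply, hB, Matrix.transpose_apply, Matrix.of_apply, Matrix.diagonal_apply]
      by_cases hij : i = j
      · subst hij
        rw [if_pos rfl, ← hq, Fintype.card_subtype, Finset.card_filter, Nat.cast_sum]
        refine Finset.sum_congr rfl fun a _ => ?_
        split_ifs <;> simp
      · rw [if_neg hij]
        refine Finset.sum_eq_zero fun a _ => ?_
        by_cases h : c a = i <;> simp [h, hij]
    rw [Matrix.mul_assoc, this]
    ext i j
    rw [mul_diagonal]
    by_cases hij : i = j
    · subst hij; simp [hD]; ring
    · simp [hD, hij]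
  rw [h1, charpoly_mul_comm', h2]

theorem filter_ne_zero_roots_X_pow_mul_prod {K : Type*} [Fintype K] (s : K → ℕ) (m : ℕ)
    (hs : ∀ i, 1 ≤ s i) :
    (roots (X ^ m * ∏ i, (X - C (2 * (s i : ℝ))))).filter (· ≠ 0) =
      Finset.univ.val.map fun i => 2 * (s i : ℝ) := by
  have hne : (∏ i, (X - C (2 * (s i : ℝ)))) ≠ 0 := (monic_prod_X_sub_C _ _).ne_zero
  rw [roots_mul (mul_ne_zero (pow_ne_zero _ X_ne_zero) hne), Multiset.filter_add, roots_X_pow,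
    roots_prod _ _ hne]
  simp only [roots_X_sub_C, Multiset.bind_singleton, Multiset.nsmul_singleton]
  rw [Multiset.filter_eq_nil.2, Multiset.filter_eq_self.2, zero_add]
  · intro a ha
    obtain ⟨i, -, rfl⟩ := Multiset.mem_map.1 ha
    have : (s i : ℝ) ≠ 0 := by exact_mod_cast (Nat.one_le_iff_ne_zero.1 (hs i))
    simpa using this
  · intro a ha
    simp [Multiset.eq_of_mem_replicate ha]

theorem map_univ_eq_of_X_pow_mul_charpoly_eq {I J : Type*} [Fintype I] [DecidableEq I] [Fintype J]
    [DecidableEq J] {q : I → ℕ} {p : J → ℕ} (hq : ∀ i, 1 ≤ q i) (hp : ∀ j, 1 ≤ p j)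
    (hsum : ∑ i, q i = ∑ j, p j) (hn : 4 ≤ ∑ j, p j) {j₁ j₂ : J} (h₁ : p j₁ = 1) (h₂ : p j₂ = 2)
    (h : X ^ Fintype.card J *
        (diagonal (fun i => 2 * (q i : ℝ)) - Matrix.of fun _ j => (q j : ℝ)).charpoly =
      X ^ Fintype.card I *
        (diagonal (fun i => 2 * (p i : ℝ)) - Matrix.of fun _ j => (p j : ℝ)).charpoly) :
    Finset.univ.val.map q = Finset.univ.val.map p := by
  set f : ℝ[X] := ∏ i, (X - C (2 * (q i : ℝ))) with hf
  set g : ℝ[X] := ∏ i, (X - C (2 * (p i : ℝ))) with hg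
  set r := Fintype.card I with hr
  set k := Fintype.card J with hk
  have hk2 : 2 ≤ k := by
    refine Fintype.one_lt_card_iff.2 ⟨j₁, j₂, fun e => ?_⟩
    rw [e] at h₁; omega
  set D := X ^ k * f - X ^ r * g with hD
  have hode : C (2 - r - k : ℝ) * D + X * derivative D = 0 := by
    have e1 := charpoly_diagonal_sub_replicate (fun i => (q i : ℝ))
    have e2 := charpoly_diagonal_sub_replicate (fun i => (p i : ℝ))
    have e3 : X ^ k * (C (2 - r : ℝ) * f + X * derivative f) =
        X ^ r * (C (2 - k : ℝ) * g + X * derivative g) := by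
      rw [← e1, ← e2]; linear_combination 2 * h
    have hX : ∀ n : ℕ, (X : ℝ[X]) * derivative (X ^ n) = C (n : ℝ) * X ^ n := by
      intro n
      rcases n with _ | n
      · simp
      · rw [derivative_X_pow]; simp [pow_succ]; ring
    rw [hD, derivative_sub, derivative_mul, derivative_mul]
    simp only [C_sub] at e3 ⊢
    linear_combination e3 + f * hX k - g * hX r
  have hcoeff : ∀ j, j ≠ r + k - 2 → D.coeff j = 0 := by
    intro j hj
    have h1 := congrArg (fun P => P.coeff j) hode
    have h2 : (2 - r - k + j : ℝ) * D.coeff j = 0 := by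
      rcases j with _ | j
      · simpa using h1
      · simp only [coeff_add, coeff_C_mul, coeff_X_mul, coeff_derivative, coeff_zero] at h1
        push_cast
        linear_combination h1
    refine (mul_eq_zero.1 h2).resolve_left fun h3 => hj ?_
    have : ((2 + j : ℕ) : ℝ) = ((r + k : ℕ) : ℝ) := by push_cast; linarith
    have := Nat.cast_injective this
    omega
  set x := D.coeff (r + k - 2) with hx
  have hDx : D = C x * X ^ (r + k - 2) := by
    ext j
    rw [coeff_C_mul_X_pow]
    split_ifs with hj
    · rw [hj]
    · exact hcoeff j hj
  have hev : ∀ (y : ℝ) (j : J), y = 2 * p j → y ^ 2 * y ^ k * ∏ i, (y - 2 * q i) = x * y ^ (r + k) := by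
    intro y j hy
    have hgy : g.eval y = 0 := by
      simp only [hg, eval_prod]
      exact Finset.prod_eq_zero (Finset.mem_univ j) (by simp [hy])
    have hfy : f.eval y = ∏ i, (y - 2 * (q i : ℝ)) := by simp [hf, eval_prod, -map_mul]
    have h1 := congrArg (eval y) hDx
    rw [hD] at h1
    simp only [eval_sub, eval_mul, eval_pow, eval_X, eval_C, hgy, hfy, mul_zero, sub_zero] at h1
    rw [mul_assoc, h1, show r + k = (r + k - 2) + 2 by omega, pow_add]
    simp only [Nat.add_sub_cancel]
    ring
  have hscale : ∀ t : ℝ, ∏ i, (2 * t - 2 * q i) = 2 ^ r * ∏ i, (t - q i) := by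
    intro t
    simp only [← mul_sub, Finset.prod_mul_distrib, Finset.prod_const, hr, Finset.card_univ]
  have hE1 : 4 * ∏ i, (1 - (q i : ℝ)) = x := by
    have := hev (2 * 1) j₁ (by rw [h₁]; norm_num)
    rw [hscale, mul_one, pow_add] at this
    have h2 : (2 : ℝ) ^ r * 2 ^ k ≠ 0 := by positivity
    apply mul_left_cancel₀ h2
    linear_combination this
  have hE2 : 16 * ∏ i, (2 - (q i : ℝ)) = x * 2 ^ r := by
    have := hev (2 * 2) j₂ (by rw [h₂]; norm_num)
    rw [hscale, pow_add, mul_pow 2 2 r] at this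
    have h2 : (2 : ℝ) ^ r * (2 * 2) ^ k ≠ 0 := by positivity
    apply mul_left_cancel₀ h2
    linear_combination this
  have hr0 : Nonempty I := by
    by_contra hI
    rw [not_nonempty_iff] at hI
    rw [Finset.univ_eq_empty, Finset.sum_empty] at hsum
    omega
  have hx0 : x = 0 := by
    by_contra hx0
    have hq3 : ∀ i, 3 ≤ q i := by
      intro i
      have n1 : q i ≠ 1 := fun e => hx0 (by
        rw [← hE1, Finset.prod_eq_zero (Finset.mem_univ i) (by simp [e]), mul_zero])
      have n2 : q i ≠ 2 := fun e => hx0 (by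
        rw [Finset.prod_eq_zero (Finset.mem_univ i) (by simp [e]), mul_zero] at hE2
        exact (mul_eq_zero.1 hE2.symm).resolve_right (by positivity))
      have := hq i
      omega
    have hq3' : ∀ i, (3 : ℝ) ≤ q i := fun i => by exact_mod_cast hq3 i
    have hlt : |∏ i, (2 - (q i : ℝ))| < |∏ i, (1 - (q i : ℝ))| := by
      rw [Finset.abs_prod, Finset.abs_prod]
      refine Finset.prod_lt_prod_of_nonempty (fun i _ => ?_) (fun i _ => ?_) Finset.univ_nonempty
      · rw [abs_pos]; linarith [hq3' i]
      · rw [abs_of_nonpos (by linarith [hq3' i]), abs_of_nonpos (by linarith [hq3' i])]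
        linarith
    have hrel : 4 * |∏ i, (2 - (q i : ℝ))| = 2 ^ r * |∏ i, (1 - (q i : ℝ))| := by
      have : 4 * ∏ i, (2 - (q i : ℝ)) = 2 ^ r * ∏ i, (1 - (q i : ℝ)) := by
        rw [← hE1] at hE2; linear_combination hE2 / 4
      have := congrArg abs this
      rwa [abs_mul, abs_mul, abs_of_pos (by norm_num : (0 : ℝ) < 4),
        abs_of_pos (by positivity : (0 : ℝ) < 2 ^ r)] at this
    rcases Nat.lt_or_ge r 2 with hr2 | hr2
    · have hr1 : r = 1 := by have := Fintype.card_pos (α := I); omega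
      obtain ⟨i, hi⟩ := Fintype.card_eq_one_iff.1 (hr ▸ hr1)
      have hu : (Finset.univ : Finset I) = {i} := by ext j; simp [hi j]
      rw [hu, Finset.sum_singleton] at hsum
      have h4 : (4 : ℝ) ≤ q i := by exact_mod_cast hsum ▸ hn
      rw [hr1, hu, Finset.prod_singleton, Finset.prod_singleton, abs_of_nonpos (by linarith),
        abs_of_nonpos (by linarith)] at hrel
      linarith
    · have : (2 : ℝ) ^ 2 ≤ 2 ^ r := pow_le_pow_right₀ (by norm_num) hr2
      nlinarith [abs_nonneg (∏ i, (1 - (q i : ℝ)))]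
  rw [hx0, C_0, zero_mul, hD, sub_eq_zero] at hDx
  have hroots := congrArg (fun P => (roots P).filter (· ≠ 0)) hDx
  have hq' := filter_ne_zero_roots_X_pow_mul_prod q k hq
  have hp' := filter_ne_zero_roots_X_pow_mul_prod p r hp
  simp only [← hf, ← hg] at hq' hp'
  simp only [hq', hp'] at hroots
  have hinj : Function.Injective fun m : ℕ => 2 * (m : ℝ) := fun a b h => by simpa using h
  apply Multiset.map_injective hinj
  simpa [Multiset.map_map] using hroots

theorem dotProduct_fiberSignMatrix_mulVec_nonneg {V I : Type*} [Fintype V] [Fintype I]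
    [DecidableEq I] (c : V → I) {z : V → ℝ} (hz : ∑ a, z a = 0) :
    0 ≤ z ⬝ᵥ (fiberSignMatrix c *ᵥ z) := by
  set B : Matrix I V ℝ := Matrix.of fun i a => if c a = i then 1 else 0 with hB
  have h : fiberSignMatrix c = (2 : ℝ) • (Bᵀ * B) - vecMulVec 1 1 := by
    ext a b
    have : (Bᵀ * B) a b = if c a = c b then 1 else 0 := by
      rw [Matrix.mul_apply, Finset.sum_eq_single (c b)]
      · simp [hB]
      · intro i _ hi
        simp [hB, hi.symm]
      · simp
    rw [Matrix.sub_apply, Matrix.smul_apply, this]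
    simp only [fiberSignMatrix, of_apply, vecMulVec_apply, Pi.one_apply]
    split_ifs <;> norm_num
  rw [h, sub_mulVec, dotProduct_sub, smul_mulVec, dotProduct_smul, ← mulVec_mulVec,
    dotProduct_mulVec z, vecMul_transpose, vecMulVec_mulVec]
  have : (1 : V → ℝ) ⬝ᵥ z = 0 := by simpa [dotProduct] using hz
  rw [this]
  simpa [dotProduct] using Finset.sum_nonneg fun i _ => mul_self_nonneg ((B *ᵥ z) i)

theorem Matrix.charpoly_add_one {V : Type*} [Fintype V] [DecidableEq V] (A : Matrix V V ℝ) :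
    (A + 1).charpoly = A.charpoly.comp (X - 1) := by
  refine Polynomial.funext fun y => ?_
  rw [eval_comp, Matrix.eval_charpoly, Matrix.eval_charpoly]
  congr 1
  rw [eval_sub, eval_X, eval_one, map_sub, map_one]
  abel

theorem seidelMatrix_apply {V : Type*} [Fintype V] [DecidableEq V] (G : SimpleGraph V) (a b : V)
    [Decidable (G.Adj a b)] :
    seidelMatrix G a b = if a = b then 0 else if G.Adj a b then -1 else 1 := by
  simp only [seidelMatrix, Matrix.sub_apply, Matrix.smul_apply, of_apply, one_apply,
    adjMatrix_apply]
  by_cases hab : a = b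
  · subst hab; simp
  · by_cases h : G.Adj a b
    · simp [hab, h]; norm_num
    · simp [hab, h]

theorem seidelMatrix_comap_top_add_one {V I : Type*} [Fintype V] [DecidableEq V] [DecidableEq I]
    (c : V → I) : seidelMatrix ((⊤ : SimpleGraph I).comap c) + 1 = fiberSignMatrix c := by
  classical
  ext a b
  rw [Matrix.add_apply, seidelMatrix_apply]
  by_cases hab : a = b
  · subst hab; simp [fiberSignMatrix]
  · by_cases h : c a = c b <;> simp [fiberSignMatrix, hab, h]

theorem exists_linear_of_charpoly_eq_fiberSignMatrix {V W I : Type*} [Fintype V] [DecidableEq V]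
    [Fintype W] [DecidableEq W] [Fintype I] [DecidableEq I] {M : Matrix W W ℝ}
    (hM : M.IsHermitian) (c : V → I) (h : M.charpoly = (fiberSignMatrix c).charpoly) :
    ∃ l : W → ℝ, ∀ x : W → ℝ, l ⬝ᵥ x = 0 → 0 ≤ x ⬝ᵥ (M *ᵥ x) := by
  have hcard : Fintype.card W = Fintype.card V := by
    rw [← M.charpoly_natDegree_eq_dim, h, charpoly_natDegree_eq_dim]
  let e : V ≃ W := (Fintype.equivOfCardEq hcard).symm
  have hA : (fiberSignMatrix c).IsHermitian := by
    ext a b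
    simp [fiberSignMatrix, eq_comm]
  obtain ⟨U, hU⟩ := hA.exists_eq_transpose_mul_mul_of_charpoly_eq (hM.submatrix e)
    (by rw [← h]; exact charpoly_reindex e.symm M)
  refine ⟨fun w => ∑ a, U a (e.symm w), fun x hx => ?_⟩
  have h1 : x ⬝ᵥ (M *ᵥ x) = (x ∘ e) ⬝ᵥ (M.submatrix e e *ᵥ (x ∘ e)) := by
    rw [submatrix_mulVec_equiv, Function.comp_assoc]
    simp
  rw [h1, hU, ← mulVec_mulVec, ← mulVec_mulVec, dotProduct_mulVec _ Uᵀ, vecMul_transpose]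
  apply dotProduct_fiberSignMatrix_mulVec_nonneg
  rw [← hx]
  simp only [mulVec, dotProduct, Finset.sum_mul]
  rw [Finset.sum_comm]
  exact Fintype.sum_equiv e _ _ fun a => by simp

theorem exists_equiv_of_map_univ_eq {I J : Type*} [Fintype I] [Fintype J] {q : I → ℕ} {p : J → ℕ}
    (h : Finset.univ.val.map q = Finset.univ.val.map p) : ∃ σ : I ≃ J, ∀ i, p (σ i) = q i := by
  have hcard : ∀ t, Fintype.card {i // q i = t} = Fintype.card {j // p j = t} := by
    intro t
    have := congrArg (Multiset.count t) h
    rw [Multiset.count_map, Multiset.count_map] at this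
    rw [Fintype.card_subtype, Fintype.card_subtype]
    simpa [Finset.card_def, eq_comm] using this
  let τ : ∀ t, {i // q i = t} ≃ {j // p j = t} := fun t => Fintype.equivOfCardEq (hcard t)
  refine ⟨(Equiv.sigmaFiberEquiv q).symm.trans
    ((Equiv.sigmaCongrRight τ).trans (Equiv.sigmaFiberEquiv p)), fun i => ?_⟩
  exact (τ (q i) ⟨i, rfl⟩).2

theorem nonempty_comap_top_iso_completeMultipartiteGraph {W I J : Type*} [Fintype W]
    [DecidableEq I] (c : W → I) {p : J → ℕ} (σ : I ≃ J)
    (h : ∀ i, p (σ i) = Fintype.card {a // c a = i}) :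
    Nonempty ((⊤ : SimpleGraph I).comap c ≃g completeMultipartiteGraph fun j => Fin (p j)) := by
  let τ : ∀ i, {a // c a = i} ≃ Fin (p (σ i)) := fun i =>
    Fintype.equivOfCardEq (by rw [Fintype.card_fin, h])
  refine ⟨⟨(Equiv.sigmaFiberEquiv c).symm.trans (Equiv.sigmaCongr σ τ), fun {a b} => ?_⟩⟩
  change σ (c a) ≠ σ (c b) ↔ c a ≠ c b
  exact σ.injective.ne_iff

/-- A graph with the Seidel spectrum of a complete multipartite graph is switching equivalent to a
complete multipartite graph. -/
theorem exists_switchingEquiv_comap_top {V W J : Type*} [Fintype V] [DecidableEq V] [Fintype W]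
    [DecidableEq W] [Fintype J] [DecidableEq J] (H : SimpleGraph W) (d : V → J)
    (h : (seidelMatrix H).charpoly = (seidelMatrix ((⊤ : SimpleGraph J).comap d)).charpoly) :
    ∃ s : Setoid W, SwitchingEquiv H ((⊤ : SimpleGraph (Quotient s)).comap (Quotient.mk s)) := by
  classical
  set M := seidelMatrix H + 1 with hM
  have hMapply : ∀ a b, M a b = if H.Adj a b then -1 else 1 := by
    intro a b
    rw [hM, Matrix.add_apply, seidelMatrix_apply]
    by_cases hab : a = b
    · subst hab; simp
    · simp [hab]
  have hMsymm : ∀ a b, M a b = M b a := fun a b => by simp [hMapply, H.adj_comm]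
  have hMsign : ∀ a b, M a b = 1 ∨ M a b = -1 := fun a b => by
    rw [hMapply]; split_ifs <;> simp
  have hMdiag : ∀ a, M a a = 1 := fun a => by simp [hMapply]
  obtain ⟨l, hl⟩ := exists_linear_of_charpoly_eq_fiberSignMatrix (M := M)
    (by ext a b; simpa using hMsymm b a) d
    (by rw [← seidelMatrix_comap_top_add_one, hM, charpoly_add_one, charpoly_add_one, h])
  obtain ⟨ε, hε, htrans⟩ := exists_smul_eq_one_transitive M hMsymm hMsign hMdiag l hl
  have sq : ∀ a, ε a * ε a = 1 := fun a => by rcases hε a with e | e <;> simp [e]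
  let s : Setoid W := ⟨fun a b => ε a * M a b * ε b = 1, fun a => by simp [hMdiag, sq],
    fun {a b} hab => by rw [hMsymm b a]; linear_combination hab, fun {a b c} => htrans a b c⟩
  refine ⟨s, ε, hε, ?_⟩
  rw [eq_sub_iff_add_eq.2 (seidelMatrix_comap_top_add_one (Quotient.mk s)),
    eq_sub_iff_add_eq.2 hM.symm]
  ext a b
  have hab : (Quotient.mk s a = Quotient.mk s b) ↔ ε a * M a b * ε b = 1 := Quotient.eq
  rw [Matrix.sub_apply, mul_diagonal, diagonal_mul, Matrix.sub_apply]
  simp only [fiberSignMatrix, of_apply, hab]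
  have hone : ε a * (1 : Matrix W W ℝ) a b * ε b = (1 : Matrix W W ℝ) a b := by
    by_cases e : a = b
    · subst e; simp [sq]
    · simp [e]
  rw [mul_sub, sub_mul, hone]
  congr 1
  rcases hε a with h1 | h1 <;> rcases hε b with h2 | h2 <;> rcases hMsign a b with h3 | h3 <;>
    simp [h1, h2, h3] <;> norm_num

theorem SwitchingEquiv.charpoly_seidelMatrix_eq {V : Type*} [Fintype V] [DecidableEq V]
    {G H : SimpleGraph V} (h : SwitchingEquiv G H) :
    (seidelMatrix H).charpoly = (seidelMatrix G).charpoly := by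
  obtain ⟨ε, hε, h⟩ := h
  have : diagonal ε * diagonal ε = 1 := by
    rw [diagonal_mul_diagonal, ← diagonal_one]
    congr 1
    ext v
    rcases hε v with e | e <;> simp [e]
  rw [h, charpoly_mul_comm, ← Matrix.mul_assoc, this, Matrix.one_mul]

/-- A complete multipartite graph on at least four vertices which has a part of size `1` and a part
of size `2` is determined, up to switching, by its Seidel spectrum. -/
theorem sDetermined_completeMultipartiteGraph {J : Type} [Fintype J] [DecidableEq J] {p : J → ℕ}
    (hp : ∀ j, 1 ≤ p j) (hn : 4 ≤ ∑ j, p j) {j₁ j₂ : J} (h₁ : p j₁ = 1) (h₂ : p j₂ = 2) :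
    SDetermined (completeMultipartiteGraph fun j => Fin (p j)) := by
  classical
  intro W _ _ H hH
  let d : (Σ j, Fin (p j)) → J := Sigma.fst
  change _ = (seidelMatrix ((⊤ : SimpleGraph J).comap d)).charpoly at hH
  obtain ⟨s, hs⟩ := exists_switchingEquiv_comap_top H d hH
  refine ⟨_, hs, ?_⟩
  set c : W → Quotient s := Quotient.mk s with hc
  have hchar : (fiberSignMatrix c).charpoly = (fiberSignMatrix d).charpoly := by
    rw [← seidelMatrix_comap_top_add_one, ← seidelMatrix_comap_top_add_one, charpoly_add_one,
      charpoly_add_one, hs.charpoly_seidelMatrix_eq, hH]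
  have hcard : Fintype.card W = Fintype.card (Σ j, Fin (p j)) := by
    rw [← (fiberSignMatrix c).charpoly_natDegree_eq_dim, hchar, charpoly_natDegree_eq_dim]
  set q : Quotient s → ℕ := fun i => Fintype.card {a // c a = i} with hq
  have hd : ∀ j, Fintype.card {x // d x = j} = p j := fun j => by
    rw [Fintype.card_congr (Equiv.sigmaSubtype j), Fintype.card_fin]
  have e1 := X_pow_mul_charpoly_fiberSignMatrix c (q := q) fun _ => rfl
  have e2 := X_pow_mul_charpoly_fiberSignMatrix d hd
  have hmap : Finset.univ.val.map q = Finset.univ.val.map p := by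
    refine map_univ_eq_of_X_pow_mul_charpoly_eq
      (fun i => Fintype.card_pos_iff.2 ((Quotient.exists_rep i).elim fun a ha => ⟨⟨a, ha⟩⟩))
      hp ?_ hn h₁ h₂ ?_
    · rw [← Fintype.card_sigma, Fintype.card_congr (Equiv.sigmaFiberEquiv c), hcard,
        Fintype.card_sigma]
      simp
    · rw [← hcard, ← hchar] at e2
      have hX : (X : ℝ[X]) ^ Fintype.card W ≠ 0 := pow_ne_zero _ X_ne_zero
      apply mul_left_cancel₀ hX
      linear_combination X ^ Fintype.card (Quotient s) * e2 - X ^ Fintype.card J * e1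
  obtain ⟨σ, hσ⟩ := exists_equiv_of_map_univ_eq hmap
  exact nonempty_comap_top_iso_completeMultipartiteGraph c σ hσ

/-- **Example.** For `n_1 ≥ ⋯ ≥ n_{k-3} ≥ 2` (here `k - 3 = m ≥ 1`, i.e. `k ≥ 4`),
the complete `k`-partite graph `K_{n_1,…,n_{k-3},2,2,1}`, whose parts are the `n i`
together with two further parts of size `2` and one of size `1`, is determined,
up to switching, by its Seidel spectrum. -/
theorem sDetermined_append_two_two_one (m : ℕ) (hm : 1 ≤ m) (n : Fin m → ℕ)
    (hna : Antitone n) (hn : ∀ i, 2 ≤ n i) :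
    SDetermined (completeMultipartiteGraph fun i : Fin (m + 3) =>
      Fin (if h : (i : ℕ) < m then n ⟨i, h⟩
        else if (i : ℕ) = m then 2 else if (i : ℕ) = m + 1 then 2 else 1)) := by
  refine sDetermined_completeMultipartiteGraph (fun i => ?_) ?_
    (j₁ := ⟨m + 2, by omega⟩) (j₂ := ⟨m, by omega⟩) (by simp) (by simp)
  · split_ifs with h
    · exact one_le_two.trans (hn _)
    all_goals norm_num
  · rw [Fin.sum_univ_castSucc, Fin.sum_univ_castSucc, Fin.sum_univ_castSucc]
    simp
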